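/- Let σ be the chord diagram of order 4 on ZMod 8 given by σ(i) = i + 4 (four pairwise interlaced chords; interlace sequence (3,3,3,3)). Then ∂Γ_σ(z) = 8z + 8z². -/

import Mathlib

/-- Number of cycles (orbits, counting fixed points) of a self-map:
the number of connected components of its functional graph. For a permutation
this is the number of cycles, counting fixed points. -/
noncomputable def cycles {α : Type*} (f : α → α) : ℕ :=
  Nat.card (Quot fun i j => f i = j)

-- `restrictTo σ A` agrees with `σ` on `A` and fixes everything else.
-- If `A` is the set of endpoints of a set of chords of `σ`, this is `σ_A`.
open Classical in
noncomputable def restrictTo {α : Type*} (f : α → α) (A : Set α) : α → α :=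
  fun i => if i ∈ A then f i else i

/-- The rotation `i ↦ i + 1` of the `2n` points of a chord diagram. -/
def rot (n : ℕ) : ZMod (2 * n) → ZMod (2 * n) := fun i => i + 1

/-- Genus of the partial dual of the chord diagram `σ` relative to the set of
chords whose endpoint set is the (`σ`-invariant) set `A`. -/
noncomputable def pdGenus (n : ℕ) (σ : ZMod (2 * n) → ZMod (2 * n))
    (A : Set (ZMod (2 * n))) : ℕ :=
  (n + 2 - cycles (rot n ∘ restrictTo σ A) - cycles (rot n ∘ restrictTo σ Aᶜ)) / 2

/-- Genus of the one-vertex ribbon graph of the chord diagram `σ`. -/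
noncomputable def genus (n : ℕ) (σ : ZMod (2 * n) → ZMod (2 * n)) : ℕ :=
  (n + 1 - cycles (rot n ∘ σ)) / 2

/-- The partial-dual genus polynomial `∂Γ_σ(z) = Σ_A z^{g_A(σ)}`, the sum being
over all sets `A` of chords of `σ` (encoded as `σ`-invariant subsets of the
`2n` points). -/
noncomputable def pdPoly (n : ℕ) (σ : ZMod (2 * n) → ZMod (2 * n)) : Polynomial ℤ :=
  if h : n = 0 then 1 else
    haveI : NeZero (2 * n) := ⟨by omega⟩
    ∑ A ∈ Finset.univ.filter (fun A : Finset (ZMod (2 * n)) => ∀ i ∈ A, σ i ∈ A),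
      Polynomial.X ^ pdGenus n σ (↑A : Set (ZMod (2 * n)))

/-!
Let `n` chords be pairwise interlaced, `σ i = i + n`. Reduction modulo `n` identifies the chords
with `ZMod n`, and a set `B` of chords makes `r ∘ σ_B` a lift to `ZMod (2 * n)` of the rotation of
`ZMod n`. This lift commutes with `i ↦ i + n`, and its `n`-th iterate sends `0` to `(1 + |B|) n`.
Hence it has one cycle if `|B|` is even and two if `|B|` is odd, so that the genus depends only on
the parity of `|B|`, and each parity is attained by half of the `2 ^ n` sets of chords.
-/

open Finset

section Cycles

variable {α : Type*}

theorem quot_mk_eq_iff_exists_iterate {f : α → α} (hf : ∀ i, i ∈ Function.periodicPts f)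
    {a b : α} :
    Quot.mk (fun i j => f i = j) a = Quot.mk (fun i j => f i = j) b ↔ ∃ m, f^[m] a = b := by
  have orbit_equivalence : Equivalence fun i j => ∃ m, f^[m] i = j := by
    refine ⟨fun i => ⟨0, rfl⟩, ?_, ?_⟩
    · rintro i _ ⟨m, rfl⟩
      obtain ⟨p, hp, hper⟩ := hf i
      refine ⟨m * p - m, ?_⟩
      rw [← Function.iterate_add_apply, Nat.sub_add_cancel (Nat.le_mul_of_pos_right m hp)]
      exact hper.const_mul m
    · rintro i _ _ ⟨m, rfl⟩ ⟨k, rfl⟩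
      exact ⟨k + m, Function.iterate_add_apply f k m i⟩
  constructor
  · intro h
    exact orbit_equivalence.eqvGen_iff.1 ((Quot.eqvGen_exact h).mono fun i j hij => ⟨1, hij⟩)
  · rintro ⟨m, rfl⟩
    induction m with
    | zero => rfl
    | succ m ih => exact ih.trans (Quot.sound (Function.iterate_succ_apply' f m a).symm)

open Classical in
theorem cycles_eq_ite_of_forall_exists_iterate {f : α → α} (hf : ∀ i, i ∈ Function.periodicPts f)
    {a b : α} (h : ∀ i, (∃ m, f^[m] a = i) ∨ ∃ m, f^[m] b = i) :
    cycles f = if ∃ m, f^[m] a = b then 1 else 2 := by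
  have univ_eq_pair : (Set.univ : Set (Quot fun i j => f i = j)) = {Quot.mk _ a, Quot.mk _ b} := by
    refine (Set.eq_univ_of_forall fun x => ?_).symm
    induction x using Quot.ind with | mk i
    exact (h i).imp (fun hi => ((quot_mk_eq_iff_exists_iterate hf).2 hi).symm)
      (fun hi => ((quot_mk_eq_iff_exists_iterate hf).2 hi).symm)
  rw [cycles, ← Set.ncard_univ, univ_eq_pair, ← quot_mk_eq_iff_exists_iterate hf]
  split_ifs with hab
  · rw [hab, Set.pair_eq_singleton, Set.ncard_singleton]
  · exact Set.ncard_pair hab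

end Cycles

section SubsetParity

variable (α : Type*) [Fintype α] [Nonempty α]

theorem card_even_subsets_and_card_odd_subsets :
    #{B : Finset α | Even #B} = 2 ^ (Fintype.card α - 1) ∧
      #{B : Finset α | ¬ Even #B} = 2 ^ (Fintype.card α - 1) := by
  have total : #{B : Finset α | Even #B} + #{B : Finset α | ¬ Even #B} =
      2 * 2 ^ (Fintype.card α - 1) := by
    rw [card_filter_add_card_filter_not, card_univ, Fintype.card_finset,
      mul_pow_sub_one Fintype.card_ne_zero]
  have balance : (#{B : Finset α | Even #B} : ℤ) - #{B : Finset α | ¬ Even #B} = 0 := by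
    rw [← sum_powerset_neg_one_pow_card_of_nonempty (univ_nonempty (α := α)), powerset_univ]
    simp only [neg_one_pow_eq_ite, sum_ite, sum_const, nsmul_eq_mul, mul_one, mul_neg,
      sub_eq_add_neg]
  omega

theorem sum_ite_even_card {M : Type*} [AddCommMonoid M] (x y : M) :
    ∑ B : Finset α, (if Even #B then x else y) =
      2 ^ (Fintype.card α - 1) • x + 2 ^ (Fintype.card α - 1) • y := by
  obtain ⟨even_card, odd_card⟩ := card_even_subsets_and_card_odd_subsets α
  rw [sum_ite, sum_const, sum_const, even_card, odd_card]

end SubsetParity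

section Interlaced

variable {n : ℕ}

/-- Reduction modulo `n`. Its fibres `{i, i + n}` are the chords of the diagram of `n` pairwise
interlaced chords, so that `ZMod n` serves as the set of these chords. -/
def chordOf (n : ℕ) : ZMod (2 * n) →+* ZMod n :=
  ZMod.castHom (Dvd.intro_left 2 rfl) (ZMod n)

theorem chordOf_natCast_self : chordOf n n = 0 := by
  rw [map_natCast, ZMod.natCast_self]

theorem two_mul_natCast_self : 2 * (n : ZMod (2 * n)) = 0 := by
  exact_mod_cast ZMod.natCast_self (2 * n)

theorem natCast_mul_self_eq_ite (k : ℕ) :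
    (n * k : ZMod (2 * n)) = if Even k then 0 else (n : ZMod (2 * n)) := by
  split_ifs with hk
  · obtain ⟨m, rfl⟩ := hk
    push_cast
    linear_combination (m : ZMod (2 * n)) * two_mul_natCast_self
  · obtain ⟨m, rfl⟩ := Nat.not_even_iff_odd.1 hk
    push_cast
    linear_combination (m : ZMod (2 * n)) * two_mul_natCast_self

variable [NeZero n]

theorem natCast_self_ne_zero : (n : ZMod (2 * n)) ≠ 0 := by
  rw [Ne, ZMod.natCast_eq_zero_iff]
  exact Nat.not_dvd_of_pos_of_lt (NeZero.pos n) (by have := NeZero.pos n; omega)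

theorem eq_or_eq_add_of_chordOf_eq {i j : ZMod (2 * n)} (h : chordOf n i = chordOf n j) :
    i = j ∨ i = j + n := by
  obtain ⟨k, hk⟩ : n ∣ (i - j).val := by
    rw [← ZMod.natCast_eq_zero_iff, ← map_natCast (chordOf n), ZMod.natCast_zmod_val, map_sub, h,
      sub_self]
  have sub_eq : i - j = n * k := by
    rw [← ZMod.natCast_zmod_val (i - j), hk, Nat.cast_mul]
  rw [natCast_mul_self_eq_ite] at sub_eq
  split_ifs at sub_eq
  · exact .inl (sub_eq_zero.1 sub_eq)
  · exact .inr (sub_eq_iff_eq_add'.1 sub_eq)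

/-- The endpoints of the chords in `B`. -/
def chordEnds (B : Finset (ZMod n)) : Finset (ZMod (2 * n)) := {i | chordOf n i ∈ B}

theorem mem_chordEnds {B : Finset (ZMod n)} {i : ZMod (2 * n)} :
    i ∈ chordEnds B ↔ chordOf n i ∈ B := by
  simp only [chordEnds, mem_filter_univ]

theorem chordEnds_compl (B : Finset (ZMod n)) : chordEnds Bᶜ = (chordEnds B)ᶜ := by
  ext i
  simp only [mem_chordEnds, mem_compl]

theorem chordEnds_injective : Function.Injective (chordEnds (n := n)) := by
  intro B C h
  ext c
  obtain ⟨i, rfl⟩ : ∃ i, chordOf n i = c := ZMod.castHom_surjective _ c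
  rw [← mem_chordEnds, h, mem_chordEnds]

theorem forall_add_mem_iff_exists_chordEnds {A : Finset (ZMod (2 * n))} :
    (∀ i ∈ A, i + n ∈ A) ↔ ∃ B, chordEnds B = A := by
  constructor
  · refine fun hA => ⟨A.image (chordOf n), ?_⟩
    ext i
    rw [mem_chordEnds, mem_image]
    refine ⟨fun ⟨j, hj, hji⟩ => ?_, fun hi => ⟨i, hi, rfl⟩⟩
    rcases eq_or_eq_add_of_chordOf_eq hji.symm with rfl | rfl
    exacts [hj, hA j hj]
  · rintro ⟨B, rfl⟩ i hi
    rwa [mem_chordEnds, map_add, chordOf_natCast_self, add_zero, ← mem_chordEnds]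

/-- The permutation `r ∘ σ_B` of the diagram of `n` pairwise interlaced chords; its cycles are the
boundary components of the ribbon graph with chords `B`. -/
noncomputable def boundaryMap (B : Finset (ZMod n)) : ZMod (2 * n) → ZMod (2 * n) :=
  rot n ∘ restrictTo (fun i => i + n) (chordEnds B)

theorem boundaryMap_apply (B : Finset (ZMod n)) (i : ZMod (2 * n)) :
    boundaryMap B i = i + 1 + if chordOf n i ∈ B then (n : ZMod (2 * n)) else 0 := by
  simp only [boundaryMap, Function.comp_apply, restrictTo, rot, mem_coe, mem_chordEnds]
  split_ifs <;> ring

theorem chordOf_boundaryMap (B : Finset (ZMod n)) (i : ZMod (2 * n)) :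
    chordOf n (boundaryMap B i) = chordOf n i + 1 := by
  rw [boundaryMap_apply, map_add, map_add, map_one, apply_ite (chordOf n), chordOf_natCast_self,
    map_zero, ite_self, add_zero]

theorem boundaryMap_injective (B : Finset (ZMod n)) : Function.Injective (boundaryMap B) := by
  intro i j h
  have same_chord : chordOf n i = chordOf n j := by
    simpa only [chordOf_boundaryMap, add_left_inj] using congrArg (chordOf n) h
  simpa only [boundaryMap_apply, same_chord, add_left_inj] using h

theorem boundaryMap_iterate_add (B : Finset (ZMod n)) (m : ℕ) (i : ZMod (2 * n)) :
    (boundaryMap B)^[m] (i + n) = (boundaryMap B)^[m] i + n := by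
  have commute : Function.Commute (boundaryMap B) (· + (n : ZMod (2 * n))) := fun j => by
    simp only [boundaryMap_apply, map_add, chordOf_natCast_self, add_zero]
    ring
  exact commute.iterate_left m i

theorem chordOf_boundaryMap_iterate_zero (B : Finset (ZMod n)) (m : ℕ) :
    chordOf n ((boundaryMap B)^[m] 0) = m := by
  induction m with
  | zero => simp only [Function.iterate_zero_apply, map_zero, Nat.cast_zero]
  | succ m ih => rw [Function.iterate_succ_apply', chordOf_boundaryMap, ih, Nat.cast_succ]

theorem boundaryMap_iterate_zero (B : Finset (ZMod n)) (m : ℕ) :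
    (boundaryMap B)^[m] 0 = m + n * Nat.count (fun j => (j : ZMod n) ∈ B) m := by
  induction m with
  | zero => simp
  | succ m ih =>
    rw [Function.iterate_succ_apply', boundaryMap_apply, chordOf_boundaryMap_iterate_zero, ih,
      Nat.count_succ]
    split_ifs <;> push_cast <;> ring

theorem count_natCast_mem (B : Finset (ZMod n)) :
    Nat.count (fun j => (j : ZMod n) ∈ B) n = #B := by
  rw [Nat.count_eq_card_filter_range]
  refine card_nbij' (fun j => (j : ZMod n)) ZMod.val ?_ ?_ ?_ ?_
  · intro j hj
    exact (mem_filter.1 hj).2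
  · intro c hc
    simpa [ZMod.val_lt] using hc
  · intro j hj
    exact ZMod.val_cast_of_lt (mem_range.1 (mem_filter.1 hj).1)
  · intro c _
    exact ZMod.natCast_zmod_val c

theorem boundaryMap_iterate_self_zero (B : Finset (ZMod n)) :
    (boundaryMap B)^[n] 0 = if Even #B then (n : ZMod (2 * n)) else 0 := by
  rw [boundaryMap_iterate_zero, count_natCast_mem, natCast_mul_self_eq_ite]
  split_ifs
  · exact add_zero _
  · rw [← two_mul, two_mul_natCast_self]

theorem exists_boundaryMap_iterate_zero_eq_iff_even_card (B : Finset (ZMod n)) :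
    (∃ m, (boundaryMap B)^[m] 0 = n) ↔ Even #B := by
  refine ⟨fun ⟨m, hm⟩ => ?_, fun hB => ⟨n, by rw [boundaryMap_iterate_self_zero, if_pos hB]⟩⟩
  by_contra hB
  have periodic : Function.IsPeriodicPt (boundaryMap B) n 0 :=
    (boundaryMap_iterate_self_zero B).trans (if_neg hB)
  have dvd : n ∣ m := by
    rw [← ZMod.natCast_eq_zero_iff, ← chordOf_boundaryMap_iterate_zero B, hm, chordOf_natCast_self]
  exact natCast_self_ne_zero (hm.symm.trans (periodic.trans_dvd dvd))

theorem exists_boundaryMap_iterate_eq (B : Finset (ZMod n)) (i : ZMod (2 * n)) :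
    (∃ m, (boundaryMap B)^[m] 0 = i) ∨ ∃ m, (boundaryMap B)^[m] n = i := by
  have same_chord : chordOf n i = chordOf n ((boundaryMap B)^[(chordOf n i).val] 0) := by
    rw [chordOf_boundaryMap_iterate_zero, ZMod.natCast_zmod_val]
  refine (eq_or_eq_add_of_chordOf_eq same_chord).imp (fun h => ⟨_, h.symm⟩)
    fun h => ⟨(chordOf n i).val, ?_⟩
  rw [← zero_add (n : ZMod (2 * n)), boundaryMap_iterate_add, ← h]

theorem cycles_boundaryMap (B : Finset (ZMod n)) :
    cycles (boundaryMap B) = if Even #B then 1 else 2 := by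
  classical
  rw [cycles_eq_ite_of_forall_exists_iterate (boundaryMap_injective B).mem_periodicPts
    (exists_boundaryMap_iterate_eq B)]
  simp only [exists_boundaryMap_iterate_zero_eq_iff_even_card]

theorem pdGenus_chordEnds (B : Finset (ZMod n)) :
    pdGenus n (fun i => i + n) (chordEnds B) = if Even #B then n / 2 else (n - 1) / 2 := by
  have genus_eq : pdGenus n (fun i => i + n) (chordEnds B) =
      (n + 2 - cycles (boundaryMap B) - cycles (boundaryMap Bᶜ)) / 2 := by
    rw [pdGenus, boundaryMap, boundaryMap, chordEnds_compl, coe_compl]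
  have even_add : Even n ↔ (Even #B ↔ Even #Bᶜ) := by
    rw [← Nat.even_add, card_add_card_compl, ZMod.card]
  have n_pos : 0 < n := NeZero.pos n
  rw [genus_eq, cycles_boundaryMap, cycles_boundaryMap]
  grind

end Interlaced

open Polynomial in
theorem pdPoly_four_interlaced_general (n : ℕ) [NeZero n] (σ : ZMod (2 * n) → ZMod (2 * n))
    (hσ : ∀ i, σ i = i + n) :
    pdPoly n σ = 2 ^ (n - 1) * (X ^ (n / 2) + X ^ ((n - 1) / 2)) := by
  obtain rfl : σ = fun i => i + (n : ZMod (2 * n)) := funext hσ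
  have invariant_sets : ({A | ∀ i ∈ A, i + n ∈ A} : Finset (Finset (ZMod (2 * n)))) =
      univ.image chordEnds := by
    ext A
    simp only [mem_filter_univ, mem_image, mem_univ, true_and,
      forall_add_mem_iff_exists_chordEnds]
  calc pdPoly n (fun i => i + n)
      = ∑ A : Finset (ZMod (2 * n)) with ∀ i ∈ A, i + (n : ZMod (2 * n)) ∈ A,
          X ^ pdGenus n (fun i => i + n) A :=
        dif_neg (NeZero.ne n)
    _ = ∑ B : Finset (ZMod n), if Even #B then X ^ (n / 2) else X ^ ((n - 1) / 2) := by
        rw [invariant_sets, sum_image chordEnds_injective.injOn]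
        simp only [pdGenus_chordEnds, apply_ite (X ^ · : ℕ → ℤ[X])]
    _ = 2 ^ (n - 1) * (X ^ (n / 2) + X ^ ((n - 1) / 2)) := by
        rw [sum_ite_even_card, ZMod.card, ← smul_add, nsmul_eq_mul, Nat.cast_pow, Nat.cast_ofNat]

open Polynomial in
/-- For the chord diagram of order 4 with four pairwise interlaced chords
(`σ i = i + 4` on `ZMod 8`), the partial-dual genus polynomial is `8z + 8z²`. -/
theorem pdPoly_four_interlaced (σ : ZMod 8 → ZMod 8) (hσ : ∀ i, σ i = i + 4) :
    pdPoly 4 σ = 8 * X + 8 * X ^ 2 := by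
  rw [pdPoly_four_interlaced_general 4 σ hσ]
  ring
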